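/- arXiv:1605.00592 — 3 statements merged into one kernel-verified Lean document; each statement's English description precedes it below -/
import Mathlib

section
/- Let V be a finite-dimensional complex symplectic vector space and Γ ⊆ Sp(V) a finite subgroup. Then every ℂ-linear derivation D₀ of the invariant algebra ℂ[V]^Γ is the restriction of a unique Γ-equivariant ℂ-linear derivation D of ℂ[V] (i.e., D commutes with the Γ-action and D(ℂ[V]^Γ) ⊆ ℂ[V]^Γ with D|_{ℂ[V]^Γ} = D₀). Moreover, if D₀ is a Poisson derivation of ℂ[V]^Γ for the restricted Poisson bracket, then D is a Poisson derivation of ℂ[V]. -/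
set_option synthInstance.maxHeartbeats 1000000
set_option maxHeartbeats 1000000
open MvPolynomial

/-- `ℂ[V]` for `V = ℂ^{2n}` in Darboux coordinates indexed by `Fin n ⊕ Fin n`. -/
abbrev Pn (n : ℕ) : Type := MvPolynomial (Fin n ⊕ Fin n) ℂ

/-- `V = ℂ^{2n}`. -/
abbrev Vn (n : ℕ) : Type := (Fin n ⊕ Fin n) → ℂ

/-- matrices acting on `V`. -/
abbrev Mn (n : ℕ) : Type := Matrix (Fin n ⊕ Fin n) (Fin n ⊕ Fin n) ℂ

/-- the general linear group of `V`. -/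
abbrev GLn (n : ℕ) := Matrix.GeneralLinearGroup (Fin n ⊕ Fin n) ℂ

/-- The standard Poisson bracket on `ℂ[V]`:
`{f,g} = Σ_i (∂f/∂x_i ∂g/∂y_i − ∂f/∂y_i ∂g/∂x_i)`. -/
noncomputable def pbracket (n : ℕ) (f g : Pn n) : Pn n :=
  ∑ i : Fin n,
    (pderiv (Sum.inl i) f * pderiv (Sum.inr i) g -
      pderiv (Sum.inr i) f * pderiv (Sum.inl i) g)

/-- Substitution of a linear change of variables: `substG n A f = f ∘ A` as polynomial
functions, i.e. `X j ↦ Σ_k A j k • X k`. -/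
noncomputable def substG (n : ℕ) (A : Mn n) : Pn n →ₐ[ℂ] Pn n :=
  aeval fun j => ∑ k, A j k • X k

/-- The invariants `ℂ[V]^Γ` of a subgroup `Γ ⊆ GL(V)`. -/
noncomputable def invariants (n : ℕ) (Γ : Subgroup (GLn n)) : Subalgebra ℂ (Pn n) where
  carrier := {f | ∀ γ ∈ Γ, substG n ((γ : GLn n) : Mn n) f = f}
  mul_mem' := fun {a b} ha hb γ hγ => by rw [map_mul, ha γ hγ, hb γ hγ]
  one_mem' := fun γ hγ => map_one _
  add_mem' := fun {a b} ha hb γ hγ => by rw [map_add, ha γ hγ, hb γ hγ]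
  zero_mem' := fun γ hγ => map_zero _
  algebraMap_mem' := fun c γ hγ => (substG n ((γ : GLn n) : Mn n)).commutes c



lemma substG_X (n : ℕ) (A : Mn n) (j : Fin n ⊕ Fin n) :
    substG n A (X j) = ∑ k, A j k • X k := by simp [substG]

lemma substG_substG (n : ℕ) (A B : Mn n) (f : Pn n) :
    substG n A (substG n B f) = substG n (B * A) f := by
  have : (substG n A).comp (substG n B) = substG n (B * A) := by
    apply MvPolynomial.algHom_ext
    intro j
    simp only [AlgHom.comp_apply, substG_X, map_sum, map_smul, Matrix.mul_apply, Finset.sum_smul,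
      Finset.smul_sum, smul_smul]
    rw [Finset.sum_comm]
  exact DFunLike.congr_fun this f

lemma substG_one (n : ℕ) (f : Pn n) : substG n 1 f = f := by
  have : substG n 1 = AlgHom.id ℂ _ := by
    apply MvPolynomial.algHom_ext
    intro j
    simp [substG_X, Matrix.one_apply]
  simpa using DFunLike.congr_fun this f

lemma pderiv_substG (n : ℕ) (A : Mn n) (k : Fin n ⊕ Fin n) (f : Pn n) :
    pderiv k (substG n A f) = ∑ j, A j k • substG n A (pderiv j f) := by
  induction f using MvPolynomial.induction_on with
  | C a =>
    have h : substG n A (C a) = C a := (substG n A).commutes a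
    simp [h]
  | add p q hp hq => simp [hp, hq, Finset.sum_add_distrib]
  | mul_X p j hp =>
    have h1 : pderiv k (substG n A (X j)) = C (A j k) := by
      rw [substG_X, map_sum, Finset.sum_eq_single k]
      · rw [Derivation.map_smul, pderiv_X_self, smul_eq_C_mul, mul_one]
      · intro b _ hb
        rw [Derivation.map_smul, pderiv_X_of_ne hb, smul_zero]
      · simp
    have h2 : ∀ i, substG n A (pderiv i (X j : Pn n)) = if j = i then 1 else 0 := by
      intro i
      by_cases hi : j = i <;> simp [hi, pderiv_X]
    rw [map_mul, Derivation.leibniz, hp, h1]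
    simp only [Derivation.leibniz, map_add, smul_eq_mul, map_mul, h2, smul_add,
      Finset.sum_add_distrib]
    congr 1
    · simp [MvPolynomial.smul_eq_C_mul, mul_comm]
    · rw [Finset.mul_sum]
      exact Finset.sum_congr rfl fun i _ => by rw [mul_smul_comm]

lemma pbracket_eq (n : ℕ) (f g : Pn n) :
    pbracket n f g = - ∑ j, ∑ l, Matrix.J (Fin n) ℂ j l • (pderiv j f * pderiv l g) := by
  simp [pbracket, Matrix.J, Fintype.sum_sum_type, Matrix.one_apply, Finset.sum_sub_distrib]
  ring

lemma bilin_change {ι S : Type*} [Fintype ι] [CommRing S] [Algebra ℂ S]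
    (A J : Matrix ι ι ℂ) (u v : ι → S) :
    ∑ j, ∑ l, J j l • ((∑ a, A a j • u a) * (∑ b, A b l • v b)) =
      ∑ a, ∑ b, (A * J * A.transpose) a b • (u a * v b) := by
  have h1 : ∀ j l, J j l • ((∑ a, A a j • u a) * (∑ b, A b l • v b)) =
      ∑ a, ∑ b, (A a j * J j l * A b l) • (u a * v b) := by
    intro j l
    rw [Finset.sum_mul_sum, Finset.smul_sum]
    refine Finset.sum_congr rfl fun a _ => ?_
    rw [Finset.smul_sum]
    refine Finset.sum_congr rfl fun b _ => ?_
    rw [smul_mul_smul_comm, smul_smul]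
    congr 1
    ring
  have h2 : ∀ a b, (A * J * A.transpose) a b • (u a * v b) =
      ∑ l, ∑ j, (A a j * J j l * A b l) • (u a * v b) := by
    intro a b
    simp only [Matrix.mul_apply, Matrix.transpose_apply, Finset.sum_mul, Finset.sum_smul]
  simp only [h1, h2]
  rw [Finset.sum_comm]
  simp only [← Finset.sum_product']
  refine Finset.sum_bij' (fun x _ => (x.2.2.1, x.2.2.2, x.1, x.2.1))
    (fun x _ => (x.2.2.1, x.2.2.2, x.1, x.2.1)) ?_ ?_ ?_ ?_ ?_ <;> simp

lemma pbracket_substG (n : ℕ) (A : Mn n) (hA : A ∈ Matrix.symplecticGroup (Fin n) ℂ)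
    (f g : Pn n) :
    pbracket n (substG n A f) (substG n A g) = substG n A (pbracket n f g) := by
  rw [SymplecticGroup.mem_iff] at hA
  simp only [pbracket_eq, pderiv_substG, map_neg, map_sum, map_smul, map_mul]
  rw [bilin_change, hA]

/-- A finite order symplectic matrix which differs from the identity by a matrix of rank at
most one is the identity. -/
lemma eq_one_of_rank_one (n : ℕ) (A : Mn n) (hA : A ∈ Matrix.symplecticGroup (Fin n) ℂ)
    (m : ℕ) (hm : m ≠ 0) (hpow : A ^ m = 1) (u v : Fin n ⊕ Fin n → ℂ)
    (h : A = 1 + Matrix.vecMulVec u v) : A = 1 := by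
  have hdet := SymplecticGroup.det_eq_one hA
  have hd : Matrix.det (1 + Matrix.vecMulVec u v) = 1 + v ⬝ᵥ u := by
    rw [Matrix.vecMulVec_eq Unit, Matrix.det_one_add_replicateCol_mul_replicateRow]
  rw [h, hd] at hdet
  have hvu : v ⬝ᵥ u = 0 := by simpa using hdet
  set N := Matrix.vecMulVec u v with hN
  have hNN : N * N = 0 := by
    rw [hN, Matrix.vecMulVec_mul_vecMulVec, hvu]
    simp
  have hp : ∀ k : ℕ, A ^ k = 1 + (k : ℂ) • N := by
    intro k
    induction k with
    | zero => simp
    | succ k ih =>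
      rw [pow_succ, ih, h, mul_add, mul_one, add_mul, one_mul, smul_mul_assoc, hNN]
      push_cast
      rw [add_smul, one_smul, smul_zero, add_zero, add_assoc]
  have h1 := hp m
  rw [hpow] at h1
  have h2 : (m : ℂ) • N = 0 := by simpa using h1.symm
  have h3 : N = 0 := (smul_eq_zero.mp h2).resolve_left (by exact_mod_cast hm)
  rw [h, h3, add_zero]

/-- the linear form with coefficient vector `c`. -/
noncomputable def linForm (n : ℕ) : Vn n →ₗ[ℂ] Pn n :=
  ∑ j, (LinearMap.proj j).smulRight (X j)

lemma linForm_apply (n : ℕ) (c : Vn n) : linForm n c = ∑ j, c j • X j := by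
  simp only [linForm, LinearMap.sum_apply, LinearMap.smulRight_apply, LinearMap.proj_apply]

lemma linForm_single (n : ℕ) (j : Fin n ⊕ Fin n) : linForm n (Pi.single j 1) = X j := by
  rw [linForm_apply, Finset.sum_eq_single j]
  · simp
  · intro b _ hb
    simp [hb]
  · simp

lemma substG_linForm_single (n : ℕ) (A : Mn n) (j : Fin n ⊕ Fin n) :
    substG n A (linForm n (Pi.single j 1)) = linForm n (A j) := by
  rw [linForm_single, substG_X, linForm_apply]

lemma pderiv_linForm (n : ℕ) (c : Vn n) (k : Fin n ⊕ Fin n) :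
    pderiv k (linForm n c) = C (c k) := by
  rw [linForm_apply, map_sum, Finset.sum_eq_single k]
  · rw [Derivation.map_smul, pderiv_X_self, smul_eq_C_mul, mul_one]
  · intro b _ hb
    rw [Derivation.map_smul, pderiv_X_of_ne hb, smul_zero]
  · simp

lemma totalDegree_linForm (n : ℕ) (c : Vn n) : (linForm n c).totalDegree ≤ 1 := by
  rw [linForm_apply]
  refine totalDegree_finsetSum_le fun j _ => ?_
  refine (totalDegree_smul_le _ _).trans ?_
  simp [totalDegree_X]

/-- linear forms whose difference with their translate is divisible by `q`. -/
noncomputable def badSub (n : ℕ) (A : Mn n) (q : Pn n) : Submodule ℂ (Vn n) where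
  carrier := {c | q ∣ linForm n c - substG n A (linForm n c)}
  zero_mem' := by simp
  add_mem' := fun {a b} ha hb => by
    have := dvd_add ha hb
    simp only [Set.mem_ofPred_eq, map_add]
    convert this using 1
    ring
  smul_mem' := fun r a ha => by
    simp only [Set.mem_ofPred_eq, map_smul, ← smul_sub] at ha ⊢
    rw [smul_eq_C_mul]
    exact dvd_mul_of_dvd_right ha _

lemma badSub_ne_top (n : ℕ) (A : Mn n) (hA : A ∈ Matrix.symplecticGroup (Fin n) ℂ)
    (m : ℕ) (hm : m ≠ 0) (hpow : A ^ m = 1) (hA1 : A ≠ 1) (q : Pn n) (hq : Prime q) :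
    badSub n A q ≠ ⊤ := by
  intro htop
  apply hA1
  have h : ∀ j, ∃ a : ℂ, linForm n (Pi.single j 1 - A j) = q * C a := by
    intro j
    have : Pi.single j 1 ∈ badSub n A q := htop ▸ Submodule.mem_top
    have h1 : q ∣ linForm n (Pi.single j 1) - substG n A (linForm n (Pi.single j 1)) := this
    rw [substG_linForm_single, ← map_sub] at h1
    obtain ⟨h, hh⟩ := h1
    by_cases h0 : h = 0
    · exact ⟨0, by rw [hh, h0]; simp⟩
    · have hdeg := totalDegree_linForm n (Pi.single j 1 - A j)
      rw [hh, totalDegree_mul_of_isDomain hq.ne_zero h0] at hdeg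
      have hq1 : q.totalDegree ≠ 0 := by
        intro hq0
        rw [totalDegree_eq_zero_iff_eq_C] at hq0
        apply hq.not_isUnit
        rw [hq0]
        refine (IsUnit.mk0 _ ?_).map C
        intro h00
        rw [h00, map_zero] at hq0
        exact hq.ne_zero hq0
      have : h.totalDegree = 0 := by omega
      rw [totalDegree_eq_zero_iff_eq_C] at this
      exact ⟨_, by rw [hh]; congr 1⟩
  choose a ha using h
  refine eq_one_of_rank_one n A hA m hm hpow (fun j => - a j)
    (fun k => constantCoeff (pderiv k q)) ?_
  ext j k
  have h1 := congrArg (fun f => constantCoeff (pderiv k f)) (ha j)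
  simp only [pderiv_linForm, Derivation.leibniz, pderiv_C, mul_zero, zero_add, smul_eq_mul,
    map_mul, constantCoeff_C] at h1
  simp only [Matrix.add_apply, Matrix.vecMulVec_apply, Matrix.one_apply, neg_mul]
  rw [← h1]
  simp only [Pi.sub_apply, Pi.single_apply]
  simp only [eq_comm (a := k)]
  ring

lemma exists_charpoly (n : ℕ) (Γ : Subgroup (GLn n)) (hfin : Finite Γ) (x : Pn n) :
    ∃ p : Polynomial (invariants n Γ), p.Monic ∧ Polynomial.aeval x p = 0 ∧
      ∀ q : Pn n, Prime q →
        (∀ γ ∈ Γ, γ ≠ 1 → ¬ q ∣ x - substG n ((γ : GLn n) : Mn n) x) →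
        ¬ q ∣ Polynomial.aeval x (Polynomial.derivative p) := by
  classical
  have : Fintype Γ := Fintype.ofFinite Γ
  let F : Γ → Polynomial (Pn n) := fun γ =>
    Polynomial.X - Polynomial.C (substG n (((γ : Γ) : GLn n) : Mn n) x)
  have hmonic : (∏ γ, F γ).Monic := Polynomial.monic_prod_of_monic _ _
    fun γ _ => Polynomial.monic_X_sub_C _
  have hmap : ∀ δ : Γ, (∏ γ, F γ).map (substG n (((δ : Γ) : GLn n) : Mn n)).toRingHom
      = ∏ γ, F γ := by
    intro δ
    rw [Polynomial.map_prod]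
    refine Fintype.prod_equiv (Equiv.mulRight δ) _ _ fun γ => ?_
    simp only [F, Polynomial.map_sub, Polynomial.map_X, Polynomial.map_C, Equiv.coe_mulRight]
    congr 2
    exact substG_substG n _ _ x
  have hlift : (∏ γ, F γ) ∈ Polynomial.lifts (algebraMap (invariants n Γ) (Pn n)) := by
    rw [Polynomial.lifts_iff_coeff_lifts]
    intro i
    refine ⟨⟨(∏ γ, F γ).coeff i, fun δ hδ => ?_⟩, rfl⟩
    have := congrArg (fun r => Polynomial.coeff r i) (hmap ⟨δ, hδ⟩)
    simp only [Polynomial.coeff_map] at this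
    exact this
  obtain ⟨p, hp, -, hpm⟩ := Polynomial.lifts_and_natDegree_eq_and_monic hlift hmonic
  have hsplit : ∏ γ, F γ = (Polynomial.X - Polynomial.C x) * ∏ γ ∈ Finset.univ.erase 1, F γ := by
    rw [← Finset.mul_prod_erase Finset.univ F (Finset.mem_univ 1)]
    congr 1
    simp only [F, Subgroup.coe_one, Units.val_one, substG_one]
  refine ⟨p, hpm, ?_, ?_⟩
  · rw [← Polynomial.eval_map_algebraMap, hp, hsplit]
    simp
  · intro q hq hγ hdvd
    rw [← Polynomial.eval_map_algebraMap, ← Polynomial.derivative_map, hp, hsplit,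
      Polynomial.derivative_mul] at hdvd
    simp only [Polynomial.derivative_sub, Polynomial.derivative_X, Polynomial.derivative_C,
      sub_zero, one_mul, Polynomial.eval_add, Polynomial.eval_mul, Polynomial.eval_sub,
      Polynomial.eval_X, Polynomial.eval_C, sub_self, zero_mul, add_zero,
      Polynomial.eval_prod] at hdvd
    obtain ⟨γ, hγm, hd⟩ := hq.exists_mem_finset_dvd hdvd
    simp only [F, Polynomial.eval_sub, Polynomial.eval_X, Polynomial.eval_C] at hd
    refine hγ γ γ.2 ?_ hd
    intro h1
    exact (Finset.mem_erase.mp hγm).1 (Subtype.ext h1)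

lemma deriv_aeval_mem (n : ℕ) (Γ : Subgroup (GLn n)) {M : Type*} [AddCommGroup M]
    [Module ℂ M] [Module (Pn n) M]
    (E : Derivation ℂ (Pn n) M) (N : Submodule (Pn n) M)
    (hE : ∀ f : invariants n Γ, E (f : Pn n) ∈ N) (x : Pn n)
    (p : Polynomial (invariants n Γ)) :
    E (Polynomial.aeval x p) - Polynomial.aeval x (Polynomial.derivative p) • E x ∈ N := by
  induction p using Polynomial.induction_on' with
  | add p q hp hq =>
    convert N.add_mem hp hq using 1
    simp only [map_add, add_smul]
    abel
  | monomial k a =>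
    rw [Polynomial.derivative_monomial]
    simp only [Polynomial.aeval_monomial, Derivation.leibniz, Derivation.leibniz_pow]
    have : (algebraMap (invariants n Γ) (Pn n) a) = (a : Pn n) := rfl
    convert N.smul_mem (x ^ k) (hE a) using 1
    rw [map_mul, this, map_natCast, ← Nat.cast_smul_eq_nsmul (Pn n) k, smul_smul, smul_smul]
    abel

/-- The key lemma. -/
lemma key (n : ℕ) (Γ : Subgroup (GLn n)) (hfin : Finite Γ)
    (hsp : ∀ γ ∈ Γ, ((γ : GLn n) : Mn n) ∈ Matrix.symplecticGroup (Fin n) ℂ)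
    {M : Type*} [AddCommGroup M] [Module ℂ M] [Module (Pn n) M] [IsScalarTower ℂ (Pn n) M]
    (E : Derivation ℂ (Pn n) M) (N : Submodule (Pn n) M)
    (hE : ∀ f : invariants n Γ, E (f : Pn n) ∈ N) (q : Pn n) (hq : Prime q)
    (c : Vn n) : ∃ s : Pn n, ¬ q ∣ s ∧ s • E (linForm n c) ∈ N := by
  classical
  let W : Submodule ℂ (Vn n) :=
    { carrier := {c | ∃ s : Pn n, ¬ q ∣ s ∧ s • E (linForm n c) ∈ N}
      zero_mem' := ⟨1, fun h => hq.not_isUnit (isUnit_of_dvd_one h), by simp⟩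
      add_mem' := by
        rintro a b ⟨s, hs, hs'⟩ ⟨t, ht, ht'⟩
        refine ⟨s * t, fun h => (hq.dvd_or_dvd h).elim hs ht, ?_⟩
        rw [map_add, map_add, smul_add]
        refine N.add_mem ?_ ?_
        · rw [mul_comm, mul_smul]
          exact N.smul_mem _ hs'
        · rw [mul_smul]
          exact N.smul_mem _ ht'
      smul_mem' := by
        rintro r a ⟨s, hs, hs'⟩
        refine ⟨s, hs, ?_⟩
        rw [map_smul, Derivation.map_smul, ← algebraMap_smul (Pn n) r, smul_comm]
        exact N.smul_mem _ hs' }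
  have hfin' : Finite {γ : Γ // γ ≠ 1} := inferInstance
  let p : Option {γ : Γ // γ ≠ 1} → Submodule ℂ (Vn n) := fun o =>
    o.elim W (fun γ => badSub n (((γ : Γ) : GLn n) : Mn n) q)
  have hcov : ⋃ i, (p i : Set (Vn n)) = Set.univ := by
    rw [Set.eq_univ_iff_forall]
    intro c
    rw [Set.mem_iUnion]
    by_contra! hc
    refine hc none ?_
    obtain ⟨P, -, hP0, hP⟩ := exists_charpoly n Γ hfin (linForm n c)
    refine ⟨Polynomial.aeval (linForm n c) (Polynomial.derivative P), hP q hq ?_, ?_⟩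
    · intro γ hγ h1 hd
      exact hc (some ⟨⟨γ, hγ⟩, fun h => h1 (congrArg Subtype.val h)⟩) hd
    · have := deriv_aeval_mem n Γ E N hE (linForm n c) P
      rw [hP0, map_zero, zero_sub] at this
      exact neg_mem_iff.mp this
  obtain ⟨i, hi⟩ := Subspace.exists_eq_top_of_iUnion_eq_univ hcov
  rcases i with _ | γ
  · have : c ∈ W := by
      change W = ⊤ at hi
      rw [hi]; trivial
    exact this
  · exfalso
    have ho := isOfFinOrder_of_finite (γ : Γ)
    refine badSub_ne_top n _ (hsp _ (γ : Γ).2) (orderOf (γ : Γ)) ho.orderOf_pos.ne' ?_ ?_ q hq hi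
    · have := pow_orderOf_eq_one (γ : Γ)
      have h2 := congrArg (fun g : Γ => ((g : GLn n) : Mn n)) this
      simp only [Subgroup.coe_pow, Units.val_pow_eq_pow_val, Subgroup.coe_one, Units.val_one] at h2
      exact h2
    · intro h
      exact γ.2 (Subtype.ext (Units.ext h))

lemma deriv_eq_zero (n : ℕ) (Γ : Subgroup (GLn n)) (hfin : Finite Γ)
    (hsp : ∀ γ ∈ Γ, ((γ : GLn n) : Mn n) ∈ Matrix.symplecticGroup (Fin n) ℂ)
    (E : Derivation ℂ (Pn n) (Pn n))
    (hE : ∀ f : invariants n Γ, E (f : Pn n) = 0) : E = 0 := by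
  apply MvPolynomial.derivation_ext
  intro j
  obtain ⟨s, hs, hs'⟩ := key n Γ hfin hsp E ⊥ (fun f => by simp [hE f]) (X j)
    (MvPolynomial.X_prime) (Pi.single j 1)
  rw [linForm_single, Submodule.mem_bot, smul_eq_mul] at hs'
  rcases mul_eq_zero.mp hs' with h | h
  · exact absurd (h ▸ dvd_zero _) hs
  · simpa using h

open scoped TensorProduct in
lemma exists_ext_frac (k R S : Type) [Field k] [CharZero k] [CommRing R] [CommRing S] [IsDomain R]
    [IsDomain S] [Algebra k R] [Algebra k S] [Algebra R S] [IsScalarTower k R S]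
    [FaithfulSMul R S] [Algebra.IsIntegral R S] (D₀ : Derivation k R R) :
    ∃ E : Derivation k S (FractionRing S), ∀ r, E (algebraMap R S r) =
      algebraMap S (FractionRing S) (algebraMap R S (D₀ r)) := by
  let K := FractionRing R
  let L := FractionRing S
  let : Algebra K L := FractionRing.liftAlgebra R L
  have : IsScalarTower R K L := FractionRing.isScalarTower_liftAlgebra R L
  have : Algebra.IsAlgebraic R S := inferInstance
  have hRL : Algebra.IsAlgebraic R L := (IsFractionRing.isAlgebraic_iff' R S L).mp this
  have : Algebra.IsAlgebraic K L := IsFractionRing.comap_isAlgebraic_iff.mp hRL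
  have : CharZero K := by
    have : CharZero R := charZero_of_injective_algebraMap (algebraMap k R).injective
    infer_instance
  have : Algebra.FormallyEtale K L := Algebra.FormallyEtale.of_isSeparable K L
  have : Algebra.FormallyEtale R K := Algebra.FormallyEtale.of_isLocalization (nonZeroDivisors R)
  have : Algebra.FormallyEtale R L := Algebra.FormallyEtale.comp R K L
  let d : Derivation k R L := (Algebra.linearMap R L).compDer D₀
  let φ : L ⊗[R] Ω[R⁄k] →ₗ[L] L := LinearMap.liftBaseChange L d.liftKaehlerDifferential
  let ψ : Ω[L⁄k] →ₗ[L] L :=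
    φ.comp (KaehlerDifferential.tensorKaehlerEquivOfFormallyEtale k R L).symm.toLinearMap
  let E : Derivation k L L := ψ.compDer (KaehlerDifferential.D k L)
  refine ⟨E.compAlgebraMap S, fun r => ?_⟩
  have h1 : algebraMap S L (algebraMap R S r) = algebraMap R L r :=
    (IsScalarTower.algebraMap_apply R S L r).symm
  change ψ (KaehlerDifferential.D k L (algebraMap S L (algebraMap R S r))) = _
  rw [h1]
  change φ ((KaehlerDifferential.tensorKaehlerEquivOfFormallyEtale k R L).symm _) = _
  rw [KaehlerDifferential.tensorKaehlerEquivOfFormallyEtale_symm_D_algebraMap]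
  simp only [φ, LinearMap.liftBaseChange_tmul, one_smul,
    Derivation.liftKaehlerDifferential_comp_D]
  exact (IsScalarTower.algebraMap_apply R S L (D₀ r))

lemma exists_derivation (n : ℕ) (Γ : Subgroup (GLn n)) (hfin : Finite Γ)
    (hsp : ∀ γ ∈ Γ, ((γ : GLn n) : Mn n) ∈ Matrix.symplecticGroup (Fin n) ℂ)
    (D₀ : Derivation ℂ (invariants n Γ) (invariants n Γ)) :
    ∃ D : Derivation ℂ (Pn n) (Pn n),
      ∀ f : invariants n Γ, D (f : Pn n) = ((D₀ f : invariants n Γ) : Pn n) := by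
  have hint : Algebra.IsIntegral (invariants n Γ) (Pn n) := by
    refine ⟨fun x => ?_⟩
    obtain ⟨p, hp, hp0, -⟩ := exists_charpoly n Γ hfin x
    exact ⟨p, hp, hp0⟩
  obtain ⟨E, hE⟩ := exists_ext_frac ℂ (invariants n Γ) (Pn n) D₀
  have hinj : Function.Injective (algebraMap (Pn n) (FractionRing (Pn n))) :=
    IsFractionRing.injective _ _
  have hX : ∀ j, ∃ g : Pn n, algebraMap (Pn n) (FractionRing (Pn n)) g = E (X j) := by
    intro j
    obtain ⟨a, b, hab, hmk⟩ := IsFractionRing.exists_reduced_fraction (Pn n) (E (X j))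
    have hb0 : (b : Pn n) ≠ 0 := nonZeroDivisors.coe_ne_zero b
    have hbE : (b : Pn n) • E (X j) = algebraMap (Pn n) (FractionRing (Pn n)) a := by
      rw [← hmk, Algebra.smul_def, IsLocalization.mk'_spec']
    have hbu : IsUnit (b : Pn n) := by
      by_contra hnu
      obtain ⟨q, hq, hqb⟩ := WfDvdMonoid.exists_irreducible_factor hnu hb0
      have hqp : Prime q := hq.prime
      obtain ⟨s, hs, t, ht⟩ := key n Γ hfin hsp E
        (LinearMap.range (Algebra.linearMap (Pn n) (FractionRing (Pn n))))
        (fun f => ⟨_, (hE f).symm⟩) q hqp (Pi.single j 1)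
      rw [linForm_single, Algebra.linearMap_apply] at ht
      have h1 : s * a = b * t := by
        apply hinj
        rw [map_mul, map_mul, ← hbE, ht, Algebra.smul_def, Algebra.smul_def]
        ring
      have h2 : q ∣ s * a := h1 ▸ dvd_mul_of_dvd_left hqb t
      rcases hqp.dvd_or_dvd h2 with h | h
      · exact hs h
      · exact hqp.not_isUnit (hab h hqb)
    obtain ⟨c, hc⟩ := hbu.exists_left_inv
    refine ⟨c * a, ?_⟩
    rw [map_mul, ← hbE, Algebra.smul_def, ← mul_assoc, ← map_mul, hc, map_one, one_mul]
  choose g hg using hX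
  let D : Derivation ℂ (Pn n) (Pn n) := mkDerivation ℂ g
  have hDE : (Algebra.linearMap (Pn n) (FractionRing (Pn n))).compDer D = E := by
    apply MvPolynomial.derivation_ext
    intro j
    change algebraMap (Pn n) (FractionRing (Pn n)) (mkDerivation ℂ g (X j)) = _
    rw [mkDerivation_X, hg]
  refine ⟨D, fun f => hinj ?_⟩
  have h := DFunLike.congr_fun hDE (f : Pn n)
  exact h.trans (hE f)

/-- conjugate of a derivation by mutually inverse algebra maps. -/
noncomputable def conjDer (n : ℕ) (D : Derivation ℂ (Pn n) (Pn n)) (σ τ : Pn n →ₐ[ℂ] Pn n)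
    (h : ∀ f, τ (σ f) = f) : Derivation ℂ (Pn n) (Pn n) :=
  Derivation.mk' (τ.toLinearMap ∘ₗ D.toLinearMap ∘ₗ σ.toLinearMap) (by
    intro a b
    simp [h])

/-- bracket as a derivation in the second variable -/
noncomputable def pbr (n : ℕ) (f : Pn n) : Derivation ℂ (Pn n) (Pn n) :=
  ∑ i : Fin n, (pderiv (Sum.inl i) f • (pderiv (Sum.inr i) : Derivation ℂ (Pn n) (Pn n)) -
      pderiv (Sum.inr i) f • (pderiv (Sum.inl i) : Derivation ℂ (Pn n) (Pn n)))

lemma pbr_apply (n : ℕ) (f g : Pn n) : pbr n f g = pbracket n f g := by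
  have h : ∀ F : Fin n → Derivation ℂ (Pn n) (Pn n), (∑ i, F i) g = ∑ i, F i g := fun F =>
    map_sum ({ toFun := fun d => d g, map_zero' := rfl, map_add' := fun _ _ => rfl } :
      Derivation ℂ (Pn n) (Pn n) →+ Pn n) F Finset.univ
  rw [pbr, pbracket, h]
  rfl

lemma pbracket_swap (n : ℕ) (f g : Pn n) : pbracket n f g = - pbracket n g f := by
  rw [pbracket, pbracket, ← Finset.sum_neg_distrib]
  exact Finset.sum_congr rfl fun i _ => by ring

/-- the failure of `D` to be Poisson, as a derivation in the second variable. -/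
noncomputable def defect (n : ℕ) (D : Derivation ℂ (Pn n) (Pn n)) (f : Pn n) :
    Derivation ℂ (Pn n) (Pn n) := ⁅D, pbr n f⁆ - pbr n (D f)

lemma defect_apply (n : ℕ) (D : Derivation ℂ (Pn n) (Pn n)) (f g : Pn n) :
    defect n D f g = D (pbracket n f g) - pbracket n f (D g) - pbracket n (D f) g := by
  rw [defect, Derivation.sub_apply, Derivation.commutator_apply]
  simp only [pbr_apply]

lemma defect_swap (n : ℕ) (D : Derivation ℂ (Pn n) (Pn n)) (f g : Pn n) :
    defect n D f g = - defect n D g f := by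
  rw [defect_apply, defect_apply, pbracket_swap n f g, pbracket_swap n f (D g),
    pbracket_swap n (D f) g, map_neg]
  ring

/-- for a finite subgroup `Γ ⊆ Sp(V)` of a complex symplectic vector space `V`,
every derivation `D₀` of `ℂ[V]^Γ` is the restriction of a unique `Γ`-equivariant derivation
`D` of `ℂ[V]`; moreover, if `D₀` is a Poisson derivation for the restricted bracket,
then `D` is a Poisson derivation of `ℂ[V]`. -/
theorem derivation_of_invariants_extends
    (n : ℕ) (Γ : Subgroup (GLn n)) (hfin : Finite Γ)
    (hsp : ∀ γ ∈ Γ, ((γ : GLn n) : Mn n) ∈ Matrix.symplecticGroup (Fin n) ℂ)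
    (D₀ : Derivation ℂ (invariants n Γ) (invariants n Γ)) :
    ∃ D : Derivation ℂ (Pn n) (Pn n),
      -- `D` is `Γ`-equivariant
      ((∀ γ ∈ Γ, ∀ f : Pn n,
          D (substG n ((γ : GLn n) : Mn n) f) = substG n ((γ : GLn n) : Mn n) (D f)) ∧
        -- `D` preserves the invariants and restricts to `D₀` there
        (∀ f : invariants n Γ, D (f : Pn n) = ((D₀ f : invariants n Γ) : Pn n))) ∧
      -- uniqueness of such an extension
      (∀ D' : Derivation ℂ (Pn n) (Pn n),
        ((∀ γ ∈ Γ, ∀ f : Pn n,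
            D' (substG n ((γ : GLn n) : Mn n) f) = substG n ((γ : GLn n) : Mn n) (D' f)) ∧
          (∀ f : invariants n Γ, D' (f : Pn n) = ((D₀ f : invariants n Γ) : Pn n))) →
        D' = D) ∧
      -- if `D₀` is Poisson then so is `D`
      ((∀ f g b : invariants n Γ, (b : Pn n) = pbracket n (f : Pn n) (g : Pn n) →
          ((D₀ b : invariants n Γ) : Pn n)
            = pbracket n ((D₀ f : invariants n Γ) : Pn n) (g : Pn n)
              + pbracket n (f : Pn n) ((D₀ g : invariants n Γ) : Pn n)) →
        ∀ f g : Pn n, D (pbracket n f g) = pbracket n (D f) g + pbracket n f (D g)) := by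
  obtain ⟨D, hD⟩ := exists_derivation n Γ hfin hsp D₀
  have huniq : ∀ D' : Derivation ℂ (Pn n) (Pn n),
      (∀ f : invariants n Γ, D' (f : Pn n) = ((D₀ f : invariants n Γ) : Pn n)) → D' = D := by
    intro D' hD'
    rw [← sub_eq_zero]
    refine deriv_eq_zero n Γ hfin hsp _ fun f => ?_
    rw [Derivation.sub_apply, hD', hD, sub_self]
  refine ⟨D, ⟨?_, hD⟩, fun D' h => huniq D' h.2, ?_⟩
  · intro γ hγ f
    have hinv : ∀ f, substG n ((γ⁻¹ : GLn n) : Mn n) (substG n (γ : Mn n) f) = f := by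
      intro f
      rw [substG_substG, ← Units.val_mul, mul_inv_cancel, Units.val_one, substG_one]
    have hinv' : ∀ f, substG n (γ : Mn n) (substG n ((γ⁻¹ : GLn n) : Mn n) f) = f := by
      intro f
      rw [substG_substG, ← Units.val_mul, inv_mul_cancel, Units.val_one, substG_one]
    have h := huniq (conjDer n D _ _ hinv) (by
      intro f
      change substG n ((γ⁻¹ : GLn n) : Mn n) (D (substG n (γ : Mn n) (f : Pn n))) = _
      rw [f.2 γ hγ, hD]
      exact (D₀ f).2 _ (Γ.inv_mem hγ))
    have h2 : substG n ((γ⁻¹ : GLn n) : Mn n) (D (substG n (γ : Mn n) f)) = D f :=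
      DFunLike.congr_fun h f
    rw [← h2, hinv']
  · intro hP
    have h1 : ∀ f : invariants n Γ, defect n D (f : Pn n) = 0 := by
      intro f
      refine deriv_eq_zero n Γ hfin hsp _ fun g => ?_
      have hmem : pbracket n (f : Pn n) (g : Pn n) ∈ invariants n Γ := by
        intro γ hγ
        rw [← pbracket_substG n _ (hsp γ hγ), f.2 γ hγ, g.2 γ hγ]
      have h := hP f g ⟨_, hmem⟩ rfl
      rw [← hD, ← hD, ← hD] at h
      rw [defect_apply, h]
      ring
    have h2 : ∀ g : Pn n, defect n D g = 0 := by
      intro g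
      refine deriv_eq_zero n Γ hfin hsp _ fun f => ?_
      rw [defect_swap, h1 f]
      simp
    intro f g
    have h3 := DFunLike.congr_fun (h2 f) g
    rw [defect_apply, Derivation.zero_apply] at h3
    linear_combination h3
end

section
/- Let E be a finite-dimensional real inner product space and Φ ⊆ E ∖ {0} a finite set such that for every α ∈ Φ the orthogonal reflection s_α fixing the hyperplane α^⊥ maps Φ to itself; let W ⊆ O(E) be the (finite) subgroup generated by the reflections s_α, α ∈ Φ. Let Φ⁺ ⊆ Φ be a positive system (i.e., Φ⁺ = {α ∈ Φ : ⟨α, v₀⟩ > 0} for some v₀ ∈ E with ⟨α, v₀⟩ ≠ 0 for all α ∈ Φ), and let Ξ ⊆ O(E) be a subgroup with Ξ(Φ⁺) = Φ⁺. If λ, λ' ∈ E are fixed by every element of Ξ and λ' = wλ for some w ∈ W, then there exists w₀ ∈ W commuting with every element of Ξ such that λ' = w₀λ. -/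
open scoped RealInnerProductSpace

/-- The orthogonal reflection in the hyperplane `α^⊥` of a real inner product space. -/
noncomputable def orthoReflection {E : Type*} [NormedAddCommGroup E] [InnerProductSpace ℝ E]
    (α : E) (x : E) : E :=
  x - (2 * ⟪x, α⟫ / ⟪α, α⟫) • α

section helpers

variable {E : Type*} [NormedAddCommGroup E] [InnerProductSpace ℝ E]

lemma oR_inner_self_ne {α : E} (h : α ≠ 0) : ⟪α, α⟫ ≠ 0 := by
  simpa using h

lemma oR_invol (α x : E) : orthoReflection α (orthoReflection α x) = x := by
  unfold orthoReflection
  by_cases h : α = 0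
  · simp [h]
  · have h' := oR_inner_self_ne h
    rw [inner_sub_left, inner_smul_left]
    have : (2 * (⟪x, α⟫ - (starRingEnd ℝ) (2 * ⟪x, α⟫ / ⟪α, α⟫) * ⟪α, α⟫) / ⟪α, α⟫)
        = - (2 * ⟪x, α⟫ / ⟪α, α⟫) := by
      simp only [conj_trivial]
      field_simp
      ring
    rw [this]
    module

/-- the reflection as a linear equivalence -/
noncomputable def sR (α : E) : E ≃ₗ[ℝ] E :=
  LinearEquiv.ofInvolutive
    { toFun := orthoReflection α
      map_add' := by
        intro x y
        unfold orthoReflection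
        rw [inner_add_left, mul_add, add_div]
        module
      map_smul' := by
        intro c x
        unfold orthoReflection
        rw [inner_smul_left]
        simp only [conj_trivial, RingHom.id_apply]
        rw [smul_sub, smul_smul]
        congr 2
        ring }
    (fun x => oR_invol α x)

lemma sR_apply (α x : E) : sR α x = x - (2 * ⟪x, α⟫ / ⟪α, α⟫) • α := rfl

lemma sR_apply' (α x : E) : sR α x = orthoReflection α x := rfl

lemma sR_sR (α x : E) : sR α (sR α x) = x := oR_invol α x

lemma sR_mul_self (α : E) : sR α * sR α = 1 := by
  ext x
  exact sR_sR α x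

lemma sR_inv (α : E) : (sR α)⁻¹ = sR α := inv_eq_of_mul_eq_one_left (sR_mul_self α)

lemma sR_isom (α x y : E) : ⟪sR α x, sR α y⟫ = ⟪x, y⟫ := by
  by_cases h : α = 0
  · simp [sR_apply, h]
  · have h' := oR_inner_self_ne h
    simp only [sR_apply, inner_sub_left, inner_sub_right, inner_smul_left, inner_smul_right,
      conj_trivial]
    rw [real_inner_comm y α]
    field_simp
    ring

lemma sR_self {α : E} (h : α ≠ 0) : sR α α = -α := by
  have h' := oR_inner_self_ne h
  rw [sR_apply, mul_div_assoc, div_self h']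
  module

lemma sR_smul (α : E) {t : ℝ} (ht : t ≠ 0) : sR (t • α) = sR α := by
  ext x
  by_cases h : α = 0
  · simp [sR_apply, h]
  have h' := oR_inner_self_ne h
  simp only [sR_apply, inner_smul_left, inner_smul_right, conj_trivial, smul_smul]
  congr 2
  field_simp

lemma sR_conj (g : E ≃ₗ[ℝ] E) (hg : ∀ x y : E, ⟪g x, g y⟫ = ⟪x, y⟫) (α : E) :
    sR (g α) * g = g * sR α := by
  ext x
  simp only [LinearEquiv.mul_apply, sR_apply, hg, map_sub, map_smul]

/-- reflection-stable finite sets -/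
structure RS (Φ : Set E) : Prop where
  fin : Φ.Finite
  zero : (0 : E) ∉ Φ
  stab : ∀ α ∈ Φ, ∀ β ∈ Φ, sR α β ∈ Φ

/-- the group -/
def WG (Φ : Set E) : Subgroup (E ≃ₗ[ℝ] E) := Subgroup.closure (sR '' Φ)

lemma RS.ne {Φ : Set E} (h : RS Φ) {α : E} (ha : α ∈ Φ) : α ≠ 0 := by
  rintro rfl; exact h.zero ha

lemma RS.neg {Φ : Set E} (h : RS Φ) {α : E} (ha : α ∈ Φ) : -α ∈ Φ := by
  rw [← sR_self (h.ne ha)]; exact h.stab _ ha _ ha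

lemma WG_prop {Φ : Set E} (h : RS Φ) {w : E ≃ₗ[ℝ] E} (hw : w ∈ WG Φ) :
    (∀ x y : E, ⟪w x, w y⟫ = ⟪x, y⟫) ∧ ∀ α ∈ Φ, w α ∈ Φ := by
  unfold WG at hw
  have hgen : ∀ w ∈ sR '' Φ, (∀ x y : E, ⟪w x, w y⟫ = ⟪x, y⟫) ∧ ∀ α ∈ Φ, w α ∈ Φ := by
    rintro _ ⟨α, ha, rfl⟩
    exact ⟨sR_isom α, h.stab α ha⟩
  induction hw using Subgroup.closure_induction'' with
  | mem x hx => exact hgen x hx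
  | inv_mem x hx =>
    obtain ⟨α, ha, rfl⟩ := hx
    rw [sR_inv]; exact hgen _ ⟨α, ha, rfl⟩
  | one => exact ⟨fun _ _ => rfl, fun _ ha => ha⟩
  | mul x y _ _ hx hy =>
    exact ⟨fun a b => by simp only [LinearEquiv.mul_apply, hx.1, hy.1],
      fun a ha => hx.2 _ (hy.2 _ ha)⟩

lemma exists_simple {Φ : Set E} (h : RS Φ) (v : E) (hv : ∀ α ∈ Φ, ⟪α, v⟫ ≠ 0) :
    ∃ Δ : Finset E, (∀ γ ∈ Δ, γ ∈ Φ ∧ 0 < ⟪γ, v⟫) ∧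
      (∀ β ∈ Φ, 0 < ⟪β, v⟫ → ∃ c : E → ℝ, (∀ i, 0 ≤ c i) ∧ β = ∑ γ ∈ Δ, c γ • γ) ∧
      (∀ γ ∈ Δ, ∀ β ∈ Φ, 0 < ⟪β, v⟫ → (∃ t : ℝ, β = t • γ) ∨ 0 < ⟪sR γ β, v⟫) := by
  classical
  let P : Finset E := h.fin.toFinset.filter (fun α => 0 < ⟪α, v⟫)
  have hP : ∀ x, x ∈ P ↔ x ∈ Φ ∧ 0 < ⟪x, v⟫ := by intro x; simp [P]
  let G : Finset E → Prop := fun Δ => Δ ⊆ P ∧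
    ∀ β ∈ P, ∃ c : E → ℝ, (∀ i, 0 ≤ c i) ∧ β = ∑ γ ∈ Δ, c γ • γ
  have hG : ∃ n, ∃ Δ, G Δ ∧ Δ.card = n := by
    refine ⟨_, P, ⟨subset_rfl, ?_⟩, rfl⟩
    intro β hβ
    refine ⟨fun γ => if γ = β then 1 else 0, fun i => by positivity, ?_⟩
    simp [Finset.sum_ite_eq', hβ, ite_smul]
  obtain ⟨Δ, ⟨hsub, hcov⟩, hcard⟩ := Nat.find_spec hG
  have hmin : ∀ Δ', G Δ' → Δ.card ≤ Δ'.card := by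
    intro Δ' h'
    rw [hcard]
    exact Nat.find_min' hG ⟨Δ', h', rfl⟩
  have hred : ∀ α ∈ Δ, ∀ d : E → ℝ, (∀ i, 0 ≤ d i) → α ≠ ∑ γ ∈ Δ.erase α, d γ • γ := by
    intro α hα d hd heq
    have : G (Δ.erase α) := by
      refine ⟨(Finset.erase_subset _ _).trans hsub, fun β hβ => ?_⟩
      obtain ⟨c, hc, hβc⟩ := hcov β hβ
      refine ⟨fun γ => c γ + c α * d γ, fun i => ?_, ?_⟩
      · have := hc i; have := hc α; have := hd i; positivity
      · rw [hβc, ← Finset.add_sum_erase _ _ hα]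
        simp only [add_smul, Finset.sum_add_distrib, mul_smul, ← Finset.smul_sum]
        rw [← heq, add_comm]
    have h1 := hmin _ this
    have h2 := Finset.card_erase_lt_of_mem hα
    omega
  refine ⟨Δ, fun γ hγ => (hP γ).1 (hsub hγ), fun β hβ hβv => hcov β ((hP β).2 ⟨hβ, hβv⟩), ?_⟩
  intro α hα β hβ hβv
  obtain ⟨hαΦ, hαv⟩ := (hP α).1 (hsub hα)
  by_contra hcon
  push Not at hcon
  obtain ⟨hnp, hle⟩ := hcon
  have hsΦ := h.stab α hαΦ β hβ
  have hneg : 0 < ⟪-(sR α β), v⟫ := by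
    rw [inner_neg_left]
    have := lt_of_le_of_ne hle (hv _ hsΦ)
    linarith
  obtain ⟨c, hc, hβc⟩ := hcov β ((hP β).2 ⟨hβ, hβv⟩)
  obtain ⟨d, hd, hdc⟩ := hcov _ ((hP _).2 ⟨h.neg hsΦ, hneg⟩)
  set k := 2 * ⟪β, α⟫ / ⟪α, α⟫ with hk
  rw [sR_apply, ← hk] at hdc
  rw [← Finset.add_sum_erase _ _ hα] at hβc hdc
  set S := ∑ γ ∈ Δ.erase α, c γ • γ with hS
  set T := ∑ γ ∈ Δ.erase α, d γ • γ with hT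
  have key : (k - c α - d α) • α = S + T := by
    have e1 : S = β - c α • α := by rw [hβc]; abel
    have e2 : T = -(β - k • α) - d α • α := by rw [hdc]; abel
    rw [e1, e2]; module
  have hpos : ∀ e : E → ℝ, (∀ i, 0 ≤ e i) → 0 ≤ ⟪∑ γ ∈ Δ.erase α, e γ • γ, v⟫ := by
    intro e he
    rw [sum_inner]
    refine Finset.sum_nonneg fun γ hγ => ?_
    rw [inner_smul_left]
    have := ((hP γ).1 (hsub (Finset.mem_of_mem_erase hγ))).2
    have := he γ
    simp only [conj_trivial]
    positivity
  have hSpos : 0 < ⟪S, v⟫ := by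
    refine lt_of_le_of_ne (hpos c hc) fun h0 => ?_
    rw [hS, sum_inner] at h0
    have hz := (Finset.sum_eq_zero_iff_of_nonneg (fun γ hγ => by
      rw [inner_smul_left]
      have := ((hP γ).1 (hsub (Finset.mem_of_mem_erase hγ))).2
      have := hc γ
      simp only [conj_trivial]
      positivity)).1 h0.symm
    have hS0 : S = 0 := by
      refine Finset.sum_eq_zero fun γ hγ => ?_
      have h1 := hz γ hγ
      have h2 := ((hP γ).1 (hsub (Finset.mem_of_mem_erase hγ))).2
      rw [inner_smul_left] at h1
      rcases mul_eq_zero.1 h1 with h3 | h3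
      · simp only [conj_trivial] at h3
        rw [h3, zero_smul]
      · exact absurd h3 h2.ne'
    apply hnp (c α)
    rw [hβc, hS0, add_zero]
  have hm : 0 < k - c α - d α := by
    have h1 : 0 < ⟪(k - c α - d α) • α, v⟫ := by
      rw [key, inner_add_left]
      have := hpos d hd
      linarith
    rw [inner_smul_left] at h1
    simp only [conj_trivial] at h1
    exact pos_of_mul_pos_left h1 hαv.le
  apply hred α hα (fun γ => (k - c α - d α)⁻¹ * (c γ + d γ))
  · intro i
    have := hc i; have := hd i; positivity
  · simp only [mul_smul, add_smul, ← Finset.smul_sum, Finset.sum_add_distrib]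
    rw [← hS, ← hT, ← key, smul_smul, inv_mul_cancel₀ hm.ne', one_smul]

lemma WG_free {Φ : Set E} (h : RS Φ) (v : E) (hv : ∀ α ∈ Φ, ⟪α, v⟫ ≠ 0)
    (u : E ≃ₗ[ℝ] E) (hu : u ∈ WG Φ) (hup : ∀ α ∈ Φ, 0 < ⟪α, v⟫ → 0 < ⟪u α, v⟫) : u = 1 := by
  obtain ⟨Δ, hΔ, hcov, hsim⟩ := exists_simple h v hv
  let S : Subgroup (E ≃ₗ[ℝ] E) := Subgroup.closure (sR '' (Δ : Set E))
  have hSW : S ≤ WG Φ := Subgroup.closure_mono (Set.image_mono fun γ hγ => (hΔ γ hγ).1)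
  have hrefl : ∀ α ∈ Φ, 0 < ⟪α, v⟫ → sR α ∈ S := by
    intro α hα hαv
    let B : Set E := {β | β ∈ Φ ∧ 0 < ⟪β, v⟫ ∧ ∃ w ∈ S, w α = β}
    have hBf : B.Finite := h.fin.subset fun β hβ => hβ.1
    have hBn : B.Nonempty := ⟨α, hα, hαv, 1, S.one_mem, rfl⟩
    obtain ⟨β, ⟨hβ, hβv, w, hwS, hwα⟩, hβmin⟩ := Set.exists_min_image B (fun β => ⟪β, v⟫) hBf hBn
    obtain ⟨c, hc, hβc⟩ := hcov β hβ hβv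
    have hex : ∃ γ ∈ Δ, 0 < ⟪β, γ⟫ := by
      by_contra hcon
      push Not at hcon
      have h1 : ⟪β, β⟫ ≤ 0 := by
        have h0 : ⟪β, β⟫ = ⟪∑ γ ∈ Δ, c γ • γ, β⟫ := congrArg (fun z => ⟪z, β⟫) hβc
        rw [h0, sum_inner]
        refine Finset.sum_nonpos fun γ hγ => ?_
        rw [inner_smul_left, real_inner_comm]
        exact mul_nonpos_of_nonneg_of_nonpos (hc γ) (hcon γ hγ)
      have h2 : 0 < ⟪β, β⟫ := real_inner_self_pos.2 (h.ne hβ)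
      linarith
    obtain ⟨γ, hγ, hβγ⟩ := hex
    have hγS : sR γ ∈ S := Subgroup.subset_closure ⟨γ, hγ, rfl⟩
    have hβS : sR β ∈ S := by
      rcases hsim γ hγ β hβ hβv with ⟨t, ht⟩ | hpos
      · have ht0 : t ≠ 0 := by
          rintro rfl
          exact h.ne hβ (by simpa using ht)
        rw [ht, sR_smul γ ht0]; exact hγS
      · exfalso
        have h1 := hβmin (sR γ β) ⟨h.stab γ (hΔ γ hγ).1 β hβ, hpos, sR γ * w,
          S.mul_mem hγS hwS, by rw [LinearEquiv.mul_apply, hwα]⟩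
        simp only [sR_apply, inner_sub_left, inner_smul_left, conj_trivial] at h1
        have h2 := (hΔ γ hγ).2
        have h3 : 0 < ⟪γ, γ⟫ := real_inner_self_pos.2 (h.ne (hΔ γ hγ).1)
        have : 0 < 2 * ⟪β, γ⟫ / ⟪γ, γ⟫ * ⟪γ, v⟫ := by positivity
        linarith
    have h4 := sR_conj w (WG_prop h (hSW hwS)).1 α
    rw [hwα] at h4
    have h5 : sR α = w⁻¹ * (sR β * w) := by rw [h4]; group
    rw [h5]
    exact S.mul_mem (S.inv_mem hwS) (S.mul_mem hβS hwS)
  have hWS : WG Φ ≤ S := by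
    refine (Subgroup.closure_le _).2 ?_
    rintro _ ⟨α, hα, rfl⟩
    rcases lt_or_gt_of_ne (hv α hα) with h1 | h1
    · have h2 := hrefl (-α) (h.neg hα) (by rw [inner_neg_left]; linarith)
      have h3 := sR_smul α (t := -1) (by norm_num)
      rw [neg_one_smul] at h3
      rwa [h3] at h2
    · exact hrefl α hα h1
  have hwords : ∀ w ∈ S, ∃ L : List E, (∀ γ ∈ L, γ ∈ Δ) ∧ (L.map sR).prod = w := by
    intro w hw
    induction hw using Subgroup.closure_induction'' with
    | mem x hx =>
      obtain ⟨γ, hγ, rfl⟩ := hx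
      exact ⟨[γ], by simpa using hγ, by simp⟩
    | inv_mem x hx =>
      obtain ⟨γ, hγ, rfl⟩ := hx
      exact ⟨[γ], by simpa using hγ, by simp [sR_inv]⟩
    | one => exact ⟨[], by simp, by simp⟩
    | mul x y _ _ hx hy =>
      obtain ⟨L, hL, rfl⟩ := hx
      obtain ⟨M, hM, rfl⟩ := hy
      refine ⟨L ++ M, ?_, by simp⟩
      intro γ hγ
      rcases List.mem_append.1 hγ with h1 | h1
      · exact hL γ h1
      · exact hM γ h1
  have hprod : ∀ L : List E, (∀ γ ∈ L, γ ∈ Δ) → (L.map sR).prod ∈ WG Φ := by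
    intro L hL
    refine hSW (S.list_prod_mem ?_)
    intro x hx
    obtain ⟨γ, hγ, rfl⟩ := List.mem_map.1 hx
    exact Subgroup.subset_closure ⟨γ, hL γ hγ, rfl⟩
  have hexch : ∀ L : List E, (∀ γ ∈ L, γ ∈ Δ) → ∀ γ ∈ Δ, ⟪(L.map sR).prod γ, v⟫ < 0 →
      ∃ L' : List E, (∀ γ ∈ L', γ ∈ Δ) ∧ L'.length + 1 = L.length ∧
        (L.map sR).prod * sR γ = (L'.map sR).prod := by
    intro L
    induction L with
    | nil =>
      intro _ γ hγ hneg
      have := (hΔ γ hγ).2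
      simp at hneg
      linarith
    | cons δ M ih =>
      intro hL γ hγ hneg
      have hδ : δ ∈ Δ := hL δ (by simp)
      have hM : ∀ γ ∈ M, γ ∈ Δ := fun x hx => hL x (by simp [hx])
      have hMW := WG_prop h (hprod M hM)
      have hMγ := hMW.2 γ (hΔ γ hγ).1
      rw [List.map_cons, List.prod_cons, LinearEquiv.mul_apply] at hneg
      rcases lt_or_gt_of_ne (hv _ hMγ) with h1 | h1
      · obtain ⟨M', hM', hlen, heq⟩ := ih hM γ hγ h1
        refine ⟨δ :: M', ?_, by simp [hlen], ?_⟩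
        · intro x hx
          rcases List.mem_cons.1 hx with rfl | hx
          · exact hδ
          · exact hM' x hx
        · rw [List.map_cons, List.prod_cons, List.map_cons, List.prod_cons, mul_assoc, heq]
      · rcases hsim δ hδ _ hMγ h1 with ⟨t, ht⟩ | h2
        · refine ⟨M, hM, by simp, ?_⟩
          have ht0 : t ≠ 0 := by
            rintro rfl
            exact h.ne hMγ (by simpa using ht)
          have h4 := sR_conj _ hMW.1 γ
          rw [ht, sR_smul δ ht0] at h4
          rw [List.map_cons, List.prod_cons, mul_assoc, ← h4, ← mul_assoc, sR_mul_self, one_mul]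
        · linarith
  have hfin : ∀ n : ℕ, ∀ L : List E, L.length = n → (∀ γ ∈ L, γ ∈ Δ) →
      (L.map sR).prod = u → u = 1 := by
    intro n
    induction n using Nat.strong_induction_on with
    | _ n ih =>
      intro L hlen hL hLu
      rcases List.eq_nil_or_concat L with rfl | ⟨M, γ, rfl⟩
      · simpa using hLu.symm
      · have hγ : γ ∈ Δ := hL γ (by simp)
        have hM : ∀ γ ∈ M, γ ∈ Δ := fun x hx => hL x (by simp [hx])
        have hu' : u = (M.map sR).prod * sR γ := by rw [← hLu]; simp
        have h1 := hup γ (hΔ γ hγ).1 (hΔ γ hγ).2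
        rw [hu', LinearEquiv.mul_apply, sR_self (h.ne (hΔ γ hγ).1), map_neg, inner_neg_left] at h1
        obtain ⟨M', hM', hlen', heq⟩ := hexch M hM γ hγ (by linarith)
        refine ih M'.length ?_ M' rfl hM' (by rw [← heq, hu'])
        simp at hlen
        omega
  obtain ⟨L, hL, hLu⟩ := hwords u (hWS hu)
  exact hfin _ L rfl hL hLu

lemma WG_finite {Φ : Set E} (h : RS Φ) (v : E) (hv : ∀ α ∈ Φ, ⟪α, v⟫ ≠ 0) :
    Finite (WG Φ) := by
  have := h.fin.to_subtype
  refine Finite.of_injective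
    (fun w : WG Φ => fun α : Φ => (⟨w.1 α.1, (WG_prop h w.2).2 α.1 α.2⟩ : Φ)) ?_
  intro a b hab
  have h1 : b⁻¹ * a = 1 := by
    apply Subtype.ext
    refine WG_free h v hv _ (b⁻¹ * a).2 ?_
    intro α hα hαv
    have h2 : a.1 α = b.1 α := by
      have := congrFun hab ⟨α, hα⟩
      simpa using this
    have h3 : ((b⁻¹ * a : WG Φ) : E ≃ₗ[ℝ] E) α = α := by
      change (b.1⁻¹) (a.1 α) = α
      rw [h2]
      exact b.1.symm_apply_apply α
    rwa [h3]
  exact (inv_mul_eq_one.1 h1).symm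

lemma main_aux {Φ : Set E} (h : RS Φ) (v : E) (hv : ∀ α ∈ Φ, ⟪α, v⟫ ≠ 0)
    (Ξ : Subgroup (E ≃ₗ[ℝ] E))
    (hΞorth : ∀ ξ ∈ Ξ, ∀ x y : E, ⟪ξ x, ξ y⟫ = ⟪x, y⟫)
    (hΞ : ∀ ξ ∈ Ξ, ∀ α ∈ Φ, 0 < ⟪α, v⟫ → ξ α ∈ Φ ∧ 0 < ⟪ξ α, v⟫)
    (lam lam' : E)
    (hfix : ∀ ξ ∈ Ξ, ξ lam = lam) (hfix' : ∀ ξ ∈ Ξ, ξ lam' = lam')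
    (w : E ≃ₗ[ℝ] E) (hw : w ∈ WG Φ) (hwl : w lam = lam') :
    ∃ w₀ ∈ WG Φ, (∀ ξ ∈ Ξ, w₀ * ξ = ξ * w₀) ∧ w₀ lam = lam' := by
  have hfinW := WG_finite h v hv
  let B : Set (E ≃ₗ[ℝ] E) := {g | g ∈ WG Φ ∧ g lam = lam'}
  have hBf : B.Finite := (Set.toFinite (WG Φ : Set (E ≃ₗ[ℝ] E))).subset fun g hg => hg.1
  obtain ⟨g, ⟨hgW, hgl⟩, hgmax⟩ := Set.exists_max_image B (fun g => ⟪g v, v⟫) hBf ⟨w, hw, hwl⟩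
  have hgp : ∀ α ∈ Φ, ⟪α, lam⟫ = 0 → 0 < ⟪α, v⟫ → 0 < ⟪g α, v⟫ := by
    intro α hα hαl hαv
    by_contra hcon
    have h1 : ⟪g α, v⟫ < 0 :=
      lt_of_le_of_ne (not_lt.1 hcon) (hv _ ((WG_prop h hgW).2 α hα))
    have h2 := hgmax (g * sR α) ⟨(WG Φ).mul_mem hgW (Subgroup.subset_closure ⟨α, hα, rfl⟩), by
      rw [LinearEquiv.mul_apply, sR_apply, real_inner_comm, hαl]; simpa using hgl⟩
    simp only [LinearEquiv.mul_apply, sR_apply, map_sub, map_smul, inner_sub_left,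
      inner_smul_left, conj_trivial] at h2
    rw [real_inner_comm] at hαv
    have h3 : 0 < ⟪α, α⟫ := real_inner_self_pos.2 (h.ne hα)
    have h4 : 0 < 2 * ⟪v, α⟫ / ⟪α, α⟫ := by positivity
    nlinarith
  refine ⟨g, hgW, fun ξ hξ => ?_, hgl⟩
  have hΞΦ : ∀ ξ ∈ Ξ, ∀ α ∈ Φ, ξ α ∈ Φ := by
    intro ξ hξ α hα
    rcases lt_or_gt_of_ne (hv α hα) with h1 | h1
    · have h2 := (hΞ ξ hξ (-α) (h.neg hα) (by rw [inner_neg_left]; linarith)).1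
      have h3 := h.neg h2
      rwa [map_neg, neg_neg] at h3
    · exact (hΞ ξ hξ α hα h1).1
  have hconj : ∀ x ∈ WG Φ, ξ * x * ξ⁻¹ ∈ WG Φ := by
    intro x hx
    have hle : WG Φ ≤ (WG Φ).comap (MulAut.conj ξ).toMonoidHom := by
      refine (Subgroup.closure_le _).2 ?_
      rintro _ ⟨α, hα, rfl⟩
      change ξ * sR α * ξ⁻¹ ∈ WG Φ
      rw [← sR_conj ξ (hΞorth ξ hξ) α, mul_inv_cancel_right]
      exact Subgroup.subset_closure ⟨ξ α, hΞΦ ξ hξ α hα, rfl⟩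
    exact hle hx
  have hξi := Ξ.inv_mem hξ
  set g' := ξ * g * ξ⁻¹ with hg'
  have hg'W : g' ∈ WG Φ := hconj g hgW
  have hg'l : g' lam = lam' := by
    rw [hg', LinearEquiv.mul_apply, LinearEquiv.mul_apply, hfix _ hξi, hgl, hfix' _ hξ]
  have hg'p : ∀ α ∈ Φ, ⟪α, lam⟫ = 0 → 0 < ⟪α, v⟫ → 0 < ⟪g' α, v⟫ := by
    intro α hα hαl hαv
    obtain ⟨h1, h2⟩ := hΞ _ hξi α hα hαv
    have h3 : ⟪ξ⁻¹ α, lam⟫ = 0 := by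
      rw [← hfix _ hξi, hΞorth _ hξi, hαl]
    exact (hΞ ξ hξ _ ((WG_prop h hgW).2 _ h1) (hgp _ h1 h3 h2)).2
  set u := g'⁻¹ * g with hu
  have huW : u ∈ WG Φ := (WG Φ).mul_mem ((WG Φ).inv_mem hg'W) hgW
  have hgu : ∀ x, g' (u x) = g x := by
    intro x
    rw [← LinearEquiv.mul_apply, hu, mul_inv_cancel_left]
  have hul : u lam = lam := by
    apply g'.injective
    rw [hgu, hgl, hg'l]
  obtain ⟨huiso, huΦ⟩ := WG_prop h huW
  have hulam : ∀ α, ⟪u α, lam⟫ = ⟪α, lam⟫ := by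
    intro α
    rw [← huiso α lam, hul]
  have hup : ∀ α ∈ Φ, ⟪α, lam⟫ = 0 → 0 < ⟪α, v⟫ → 0 < ⟪u α, v⟫ := by
    intro α hα hαl hαv
    by_contra hcon
    have h1 : ⟪u α, v⟫ < 0 := lt_of_le_of_ne (not_lt.1 hcon) (hv _ (huΦ α hα))
    have h2 := hg'p (-(u α)) (h.neg (huΦ α hα)) (by rw [inner_neg_left, hulam, hαl, neg_zero])
      (by rw [inner_neg_left]; linarith)
    rw [map_neg, hgu, inner_neg_left] at h2
    have := hgp α hα hαl hαv
    linarith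
  have hε : ∃ ε : ℝ, 0 < ε ∧ ∀ α ∈ Φ, ⟪α, lam⟫ ≠ 0 → |ε * ⟪α, v⟫| < |⟪α, lam⟫| := by
    have h1 : ∀ᶠ ε : ℝ in nhdsWithin 0 (Set.Ioi 0),
        ∀ α ∈ Φ, ⟪α, lam⟫ ≠ 0 → |ε * ⟪α, v⟫| < |⟪α, lam⟫| := by
      refine (Filter.eventually_all_finite h.fin).2 fun α _ => ?_
      by_cases h0 : ⟪α, lam⟫ = 0
      · exact Filter.Eventually.of_forall fun ε h2 => absurd h0 h2
      · have hc : Continuous fun ε : ℝ => |ε * ⟪α, v⟫| := by fun_prop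
        have h2 : ∀ᶠ ε : ℝ in nhds 0, |ε * ⟪α, v⟫| < |⟪α, lam⟫| :=
          hc.continuousAt.eventually_lt continuousAt_const (by simpa using h0)
        exact (h2.filter_mono nhdsWithin_le_nhds).mono fun ε h3 _ => h3
    obtain ⟨ε, h2, h3⟩ := (h1.and self_mem_nhdsWithin).exists
    exact ⟨ε, h3, h2⟩
  obtain ⟨ε, hε0, hε⟩ := hε
  have hin : ∀ α, ⟪α, lam + ε • v⟫ = ⟪α, lam⟫ + ε * ⟪α, v⟫ := by
    intro α
    rw [inner_add_right, inner_smul_right]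
  have hu1 : u = 1 := by
    refine WG_free h (lam + ε • v) ?_ u huW ?_
    · intro α hα h0
      rw [hin] at h0
      by_cases h1 : ⟪α, lam⟫ = 0
      · rw [h1, zero_add] at h0
        rcases mul_eq_zero.1 h0 with h2 | h2
        · exact hε0.ne' h2
        · exact hv α hα h2
      · have h2 := hε α hα h1
        have h3 : ε * ⟪α, v⟫ = - ⟪α, lam⟫ := by linarith
        rw [h3, abs_neg] at h2
        exact lt_irrefl _ h2
    · intro α hα hpos
      rw [hin] at hpos ⊢
      rw [hulam]
      rcases lt_trichotomy ⟪α, lam⟫ 0 with h1 | h1 | h1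
      · have h2 := hε α hα h1.ne
        rw [abs_of_neg h1] at h2
        have := le_abs_self (ε * ⟪α, v⟫)
        linarith
      · rw [h1, zero_add] at hpos ⊢
        exact mul_pos hε0 (hup α hα h1 (pos_of_mul_pos_right hpos hε0.le))
      · have h2 := hε (u α) (huΦ α hα) (by rw [hulam]; exact h1.ne')
        rw [hulam, abs_of_pos h1] at h2
        have := neg_abs_le (ε * ⟪u α, v⟫)
        linarith
  have h5 : g' = g := inv_mul_eq_one.1 hu1
  rw [← h5, hg', inv_mul_cancel_right, ← hg', h5]

end helpers

/-- let `Φ` be a finite set of nonzero vectors in a finite-dimensional real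
inner product space `E`, stable under all the orthogonal reflections `s_α`, `α ∈ Φ`, and let
`W` be the subgroup generated by these reflections.  Let `Φ⁺` be a positive system for `Φ`
and `Ξ` a subgroup of orthogonal transformations with `Ξ(Φ⁺) = Φ⁺`.  If `λ, λ'` are fixed by
`Ξ` and `W`-conjugate, then they are conjugate by an element of `W` commuting with every
element of `Ξ`. -/
theorem fixed_by_diagram_automorphisms_conjugate_by_centralizer
    {E : Type*} [NormedAddCommGroup E] [InnerProductSpace ℝ E] [FiniteDimensional ℝ E]
    (Φ : Set E) (hΦfin : Φ.Finite) (hΦ0 : (0 : E) ∉ Φ)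
    (hstab : ∀ α ∈ Φ, ∀ β ∈ Φ, orthoReflection α β ∈ Φ)
    (W : Subgroup (E ≃ₗ[ℝ] E))
    (hW : W = Subgroup.closure
      {w : E ≃ₗ[ℝ] E | ∃ α ∈ Φ, ∀ x : E, w x = orthoReflection α x})
    (v₀ : E) (hv₀ : ∀ α ∈ Φ, ⟪α, v₀⟫ ≠ 0)
    (Φp : Set E) (hΦp : Φp = {α ∈ Φ | 0 < ⟪α, v₀⟫})
    (Ξ : Subgroup (E ≃ₗ[ℝ] E))
    (hΞorth : ∀ ξ ∈ Ξ, ∀ x y : E, ⟪ξ x, ξ y⟫ = ⟪x, y⟫)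
    (hΞΦp : ∀ ξ ∈ Ξ, (ξ : E → E) '' Φp = Φp)
    (lam lam' : E)
    (hfix : ∀ ξ ∈ Ξ, ξ lam = lam) (hfix' : ∀ ξ ∈ Ξ, ξ lam' = lam')
    (w : E ≃ₗ[ℝ] E) (hw : w ∈ W) (hwl : w lam = lam') :
    ∃ w₀ ∈ W, (∀ ξ ∈ Ξ, w₀ * ξ = ξ * w₀) ∧ w₀ lam = lam' := by
  have hRS : RS Φ := ⟨hΦfin, hΦ0, fun α hα β hβ => by
    rw [sR_apply']; exact hstab α hα β hβ⟩
  have hWG : W = WG Φ := by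
    rw [hW, WG]
    congr 1
    ext g
    constructor
    · rintro ⟨α, hα, hg⟩
      exact ⟨α, hα, LinearEquiv.ext fun x => (hg x).symm⟩
    · rintro ⟨α, hα, rfl⟩
      exact ⟨α, hα, fun x => rfl⟩
  rw [hWG] at hw ⊢
  refine main_aux hRS v₀ hv₀ Ξ hΞorth ?_ lam lam' hfix hfix' w hw hwl
  intro ξ hξ α hα hαv
  have h1 : ξ α ∈ (ξ : E → E) '' Φp := ⟨α, by rw [hΦp]; exact ⟨hα, hαv⟩, rfl⟩
  rw [hΞΦp ξ hξ, hΦp] at h1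
  exact h1
end

section
/- Let 𝔤 be a finite-dimensional complex semisimple Lie algebra with Killing form κ, and let (e,h,f) be an sl₂-triple in 𝔤 (so [h,e] = 2e, [h,f] = −2f, [e,f] = h, with e ≠ 0). Then 𝔤 decomposes as a direct sum of vector spaces 𝔤 = [𝔤, f] ⊕ 𝔷_𝔤(e), where 𝔷_𝔤(e) = {x ∈ 𝔤 : [e,x] = 0}, and the skew-symmetric bilinear form ω(x,y) := κ(e, [x,y]) on 𝔤 restricts to a nondegenerate (symplectic) form on the subspace V := [𝔤, f]. -/
open Polynomial in
/-- The commutation relation `E F^(n+1) = F^(n+1) E + (n+1) F^n (H - n)`. -/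
lemma sl2aux_pow {A : Type*} [Ring A] [Algebra ℂ A] (E F H : A)
    (hHF : H * F = F * H - (2 : ℂ) • F) (hEF : E * F = F * E + H) (n : ℕ) :
    E * F ^ (n + 1) = F ^ (n + 1) * E + ((n : ℂ) + 1) • (F ^ n * H - (n : ℂ) • F ^ n) := by
  induction n with
  | zero => simp [hEF]
  | succ n ih =>
    rw [pow_succ F (n + 1), ← mul_assoc, ih, add_mul, smul_mul_assoc, sub_mul, mul_assoc, hEF,
      mul_assoc (F ^ n), hHF, mul_assoc (F ^ (n + 1)), mul_add, mul_sub, smul_mul_assoc,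
      ← mul_assoc (F ^ n), mul_smul_comm, ← pow_succ F n]
    push_cast
    module

/-- `[H,E] = 2cE` with `c ≠ 0` forces `E` to be nilpotent in a finite-dimensional algebra. -/
lemma sl2aux_nilp {A : Type*} [Ring A] [Algebra ℂ A] [Module.Finite ℂ A] (E H : A) (c : ℂ)
    (hc : c ≠ 0) (hHE : H * E = E * H + c • E) : ∃ n : ℕ, E ^ n = 0 := by
  by_contra! hne
  have hpow : ∀ n : ℕ, H * E ^ n = E ^ n * H + ((n : ℂ) * c) • E ^ n := by
    intro n
    induction n with
    | zero => simp
    | succ n ih =>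
      rw [pow_succ, ← mul_assoc, ih, add_mul, mul_assoc, hHE, mul_add, smul_mul_assoc,
        mul_smul_comm, ← mul_assoc]
      push_cast
      module
  have hinj : Function.Injective (fun n : ℕ => (n : ℂ) * c) := by
    intro a b hab
    simpa [hc] using hab
  have hli := Module.End.eigenvectors_linearIndependent'
    (LinearMap.mulLeft ℂ H - LinearMap.mulRight ℂ H) (fun n : ℕ => (n : ℂ) * c) hinj
    (fun n => E ^ n) (fun n => by
      refine ⟨?_, hne n⟩
      rw [Module.End.mem_eigenspace_iff]
      simp [hpow n])
  have hfin : Finite ℕ := hli.finite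
  exact not_finite ℕ

open Polynomial in
lemma sl2aux_disj {V : Type*} [AddCommGroup V] [Module ℂ V] [Module.Finite ℂ V]
    (E F H : Module.End ℂ V)
    (hHE : H * E = E * H + (2 : ℂ) • E)
    (hHF : H * F = F * H - (2 : ℂ) • F) (hEF : E * F = F * E + H)
    (w : V) (hw : E (F w) = 0) : F w = 0 := by
  obtain ⟨N, hN⟩ := sl2aux_nilp F H (-2) (by norm_num) (by rw [hHF]; module)
  obtain ⟨M, hM⟩ := sl2aux_nilp E H 2 (by norm_num) hHE
  have hHE' : ∀ v, H (E v) = E (H v) + (2 : ℂ) • E v := fun v => by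
    simpa using congrArg (fun T : Module.End ℂ V => T v) hHE
  have hHF' : ∀ v, H (F v) = F (H v) - (2 : ℂ) • F v := fun v => by
    simpa using congrArg (fun T : Module.End ℂ V => T v) hHF
  have h1 : ∀ N : ℕ, ∀ m : V, E m = 0 → (F ^ N) m = 0 →
      aeval H (∏ i ∈ Finset.range N, (X - C (i : ℂ))) m = 0 := by
    intro N
    induction N with
    | zero => intro m _ h; simpa using h
    | succ n ih =>
      intro m hm h
      have key := congrArg (fun T : Module.End ℂ V => T m) (sl2aux_pow E F H hHF hEF n)
      have hne : ((n : ℂ) + 1) ≠ 0 := Nat.cast_add_one_ne_zero n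
      simp only [Module.End.mul_apply, LinearMap.add_apply, LinearMap.smul_apply,
        LinearMap.sub_apply, h, hm, map_zero, zero_add] at key
      have k2 := (smul_eq_zero.mp key.symm).resolve_left hne
      have := ih (H m - (n : ℂ) • m) (by
        have := hHE' m
        rw [hm] at this
        simp only [map_zero, smul_zero, add_zero] at this
        simp [← this, hm]) (by simpa using k2)
      rw [Finset.prod_range_succ, map_mul, Module.End.mul_apply]
      convert this using 2
      simp only [map_sub, aeval_X, aeval_C, LinearMap.sub_apply, Module.algebraMap_end_apply]
  have h2 : ∀ N : ℕ, ∀ m : V, E (F m) = 0 → (E ^ N) m = 0 →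
      aeval H (∏ i ∈ Finset.range N, (X - C (-((i : ℂ) + 2)))) (F m) = 0 := by
    intro N
    induction N with
    | zero => intro m _ h; simp at h; simp [h]
    | succ n ih =>
      intro m hm h
      have key := congrArg (fun T : Module.End ℂ V => T m)
        (sl2aux_pow F E (-H) (by rw [neg_mul, hHE, mul_neg]; module) (by rw [hEF]; abel) n)
      have hne : ((n : ℂ) + 1) ≠ 0 := Nat.cast_add_one_ne_zero n
      have hm2 : (E ^ (n + 1)) (F m) = 0 := by
        rw [pow_succ, Module.End.mul_apply, hm, map_zero]
      simp only [Module.End.mul_apply, LinearMap.add_apply, LinearMap.smul_apply,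
        LinearMap.sub_apply, h, hm2, map_zero, zero_add] at key
      have k2 := (smul_eq_zero.mp key.symm).resolve_left hne
      have := ih (H m + (n : ℂ) • m) (by
        have e1 : F (H m) = H (F m) + (2 : ℂ) • F m := by rw [hHF']; module
        have e2 := hHE' (F m)
        rw [hm] at e2
        simp only [map_zero, smul_zero, add_zero] at e2
        rw [map_add, e1]
        simp [hm, ← e2]) (by
          have : (E ^ n) (H m + (n : ℂ) • m) =
            -((E ^ n) ((-H) m) - (n : ℂ) • (E ^ n) m) := by
              simp only [map_add, map_smul, LinearMap.neg_apply, map_neg]; module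
          rw [this, k2, neg_zero])
      rw [Finset.prod_range_succ, map_mul, Module.End.mul_apply]
      convert this using 2
      simp only [map_sub, aeval_X, aeval_C, LinearMap.sub_apply, Module.algebraMap_end_apply,
        map_add, map_smul, hHF']
      module
  have a1 := h1 N (F w) hw (by rw [hN]; rfl)
  have a2 := h2 M w hw (by rw [hM]; rfl)
  have hcop : IsCoprime (∏ i ∈ Finset.range N, (X - C (i : ℂ)))
      (∏ i ∈ Finset.range M, (X - C (-((i : ℂ) + 2)))) := by
    refine IsCoprime.prod_left fun i _ => IsCoprime.prod_right fun j _ => ?_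
    apply isCoprime_X_sub_C_of_isUnit_sub
    rw [isUnit_iff_ne_zero, sub_neg_eq_add]
    exact_mod_cast (by omega : i + (j + 2) ≠ 0)
  obtain ⟨a, b, hab⟩ := hcop
  have := congrArg (fun p => aeval H p (F w)) hab
  simp only [map_add, map_mul, map_one, LinearMap.add_apply, Module.End.mul_apply, a1, a2,
    map_zero, add_zero, Module.End.one_apply] at this
  exact this.symm

lemma sl2aux_compl {V : Type*} [AddCommGroup V] [Module ℂ V] [Module.Finite ℂ V]
    (E F H : Module.End ℂ V)
    (hHE : H * E = E * H + (2 : ℂ) • E)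
    (hHF : H * F = F * H - (2 : ℂ) • F) (hEF : E * F = F * E + H) :
    IsCompl (LinearMap.range F) (LinearMap.ker E) ∧ ∀ w, F (E w) = 0 → E w = 0 := by
  have hA := sl2aux_disj E F H hHE hHF hEF
  have hB := sl2aux_disj F E (-H) (by rw [neg_mul, hHF, mul_neg]; module)
    (by rw [neg_mul, hHE, mul_neg]; module) (by rw [hEF]; abel)
  have d1 : Disjoint (LinearMap.range F) (LinearMap.ker E) := by
    rw [Submodule.disjoint_def]
    rintro _ ⟨w, rfl⟩ h
    exact hA w h
  have d2 : Disjoint (LinearMap.range E) (LinearMap.ker F) := by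
    rw [Submodule.disjoint_def]
    rintro _ ⟨w, rfl⟩ h
    exact hB w h
  refine ⟨?_, hB⟩
  have r1 := Submodule.finrank_add_finrank_le_of_disjoint d1
  have r2 := Submodule.finrank_add_finrank_le_of_disjoint d2
  have r3 := LinearMap.finrank_range_add_finrank_ker E
  have r4 := LinearMap.finrank_range_add_finrank_ker F
  exact (Submodule.isCompl_iff_disjoint _ _ (by omega)).mpr d1

/-- let `𝔤` be a finite-dimensional complex semisimple Lie algebra with Killing
form `κ`, and `(e,h,f)` an `sl₂`-triple with `e ≠ 0`.  Then `𝔤 = [𝔤,f] ⊕ 𝔷_𝔤(e)` as vector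
spaces, the form `ω(x,y) = κ(e,[x,y])` is skew-symmetric, and it restricts to a nondegenerate
(symplectic) form on the subspace `V = [𝔤,f]`. -/
theorem sl2_triple_symplectic_slice_decomposition
    (L : Type*) [LieRing L] [LieAlgebra ℂ L] [Module.Finite ℂ L]
    [LieAlgebra.IsSemisimple ℂ L]
    (e h f : L) (he : e ≠ 0)
    (hhe : ⁅h, e⁆ = (2 : ℂ) • e) (hhf : ⁅h, f⁆ = (-2 : ℂ) • f) (hef : ⁅e, f⁆ = h) :
    IsCompl (LinearMap.range (LieAlgebra.ad ℂ L f)) (LinearMap.ker (LieAlgebra.ad ℂ L e)) ∧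
    (∀ x y : L, killingForm ℂ L e ⁅x, y⁆ = - killingForm ℂ L e ⁅y, x⁆) ∧
    (∀ x ∈ LinearMap.range (LieAlgebra.ad ℂ L f),
      (∀ y ∈ LinearMap.range (LieAlgebra.ad ℂ L f), killingForm ℂ L e ⁅x, y⁆ = 0) →
      x = 0) := by
  obtain ⟨hc, hB⟩ := sl2aux_compl (LieAlgebra.ad ℂ L e) (LieAlgebra.ad ℂ L f)
    (LieAlgebra.ad ℂ L h)
    (by ext x
        have := leibniz_lie h e x
        rw [hhe, smul_lie] at this
        simp [this, add_comm])
    (by ext x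
        have := leibniz_lie h f x
        rw [hhf, smul_lie] at this
        simp only [Module.End.mul_apply, LieAlgebra.ad_apply, LinearMap.sub_apply,
          LinearMap.smul_apply, this]
        module)
    (by ext x
        have := leibniz_lie e f x
        rw [hef] at this
        simp [this, add_comm])
  refine ⟨hc, fun x y => by rw [← lie_skew x y, map_neg], ?_⟩
  intro x hx hxy
  have hnd := LieAlgebra.IsKilling.killingForm_nondegenerate ℂ L
  have h0 : ⁅f, ⁅e, x⁆⁆ = 0 := by
    refine hnd.1 _ fun b => ?_
    have h1 := hxy ⁅f, b⁆ ⟨b, rfl⟩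
    have e1 : killingForm ℂ L ⁅e, x⁆ ⁅f, b⁆ = 0 := by
      rw [← h1]; exact LieModule.traceForm_apply_lie_apply ℂ L L e x ⁅f, b⁆
    have e2 : killingForm ℂ L ⁅⁅e, x⁆, f⁆ b = killingForm ℂ L ⁅e, x⁆ ⁅f, b⁆ :=
      LieModule.traceForm_apply_lie_apply ℂ L L _ _ _
    rw [← lie_skew, map_neg, LinearMap.neg_apply, e2, e1, neg_zero]
  have h3 : ⁅e, x⁆ = 0 := hB x h0
  exact Submodule.disjoint_def.mp hc.disjoint x hx h3
end
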